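/- arXiv:1605.07959 — 8 statements merged into one kernel-verified Lean document; each statement's English description precedes it below -/
import Mathlib

section
/- Let G be a finite simple graph with a neighborhood diversity partition N_1, …, N_k, and let X, Y ⊆ V(G) be two sets having the same shape with respect to this partition (i.e. |X ∩ N_i| = |Y ∩ N_i| for every i). Then there exists a graph automorphism φ of G with φ(X) = Y. -/
/-!
Two facts give the automorphism. First, a permutation of the vertices that preserves every class
is an automorphism: replacing one endpoint of a pair by a twin does not affect adjacency, and both
endpoints can be replaced in turn (`adj_iff_of_twins`). Second, since `X` and `Y` have the same
shape, so do their complements (`N i` minus `X` and `N i` minus `Y` have the same size), and gluing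
bijections `N i ∩ X → N i ∩ Y` and `N i \ X → N i \ Y` over all `i` gives a class-preserving
permutation that carries `X` onto `Y` (`exists_perm_of_card_eq`).
-/

/-- Adjacency of two distinct vertices depends only on their classes, where `c v` is the class
of `v` and vertices of the same class are twins. -/
lemma adj_iff_of_twins {V ι : Type} {G : SimpleGraph V} {c : V → ι}
    (htwin : ∀ u v w, c u = c v → w ≠ u → w ≠ v → (G.Adj u w ↔ G.Adj v w))
    {u v u' v' : V} (huv : u ≠ v) (huv' : u' ≠ v') (hu : c u = c u') (hv : c v = c v') :
    G.Adj u v ↔ G.Adj u' v' := by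
  -- The replacement `u, v` to `u', v` to `u', v'` passes through a loop when `u' = v`; the
  -- replacement then goes through `u, v'`, or the pair is merely swapped.
  by_cases h1 : u' = v
  · by_cases h2 : u = v'
    · rw [h1, h2, G.adj_comm]
    · rw [G.adj_comm u v, htwin v v' u hv huv h2, G.adj_comm v' u,
        htwin u u' v' hu (Ne.symm h2) huv'.symm]
  · rw [htwin u u' v hu huv.symm (Ne.symm h1), G.adj_comm u' v,
      htwin v v' u' hv h1 huv', G.adj_comm v' u']

/-- A class-preserving permutation carrying `X` onto `Y` exists as soon as `X` and `Y` meet every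
fibre of `c` in equally many elements. -/
lemma exists_perm_of_card_eq {V ι : Type} [Fintype V] [DecidableEq V] [DecidableEq ι]
    (c : V → ι) (X Y : Finset V)
    (h : ∀ i, (X.filter (fun v => c v = i)).card = (Y.filter (fun v => c v = i)).card) :
    ∃ σ : Equiv.Perm V, ∀ v, c (σ v) = c v ∧ (σ v ∈ Y ↔ v ∈ X) := by
  have hcompl : ∀ i, (Xᶜ.filter (fun v => c v = i)).card = (Yᶜ.filter (fun v => c v = i)).card := by
    intro i
    have key : ∀ Z : Finset V, (Z.filter (fun v => c v = i)).card
        + (Zᶜ.filter (fun v => c v = i)).card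
        = (Finset.univ.filter (fun v => c v = i)).card := by
      intro Z
      rw [← Finset.card_union_of_disjoint
        (Finset.disjoint_filter_filter disjoint_compl_right), ← Finset.filter_union,
        Finset.union_compl]
    have := key X
    have := key Y
    have := h i
    omega
  have hfib : ∀ p : ι × Bool,
      Nonempty ({v // (c v, decide (v ∈ X)) = p} ≃ {v // (c v, decide (v ∈ Y)) = p}) := by
    rintro ⟨i, b⟩
    refine ⟨Fintype.equivOfCardEq ?_⟩
    rw [Fintype.card_subtype, Fintype.card_subtype]
    cases b
    · convert hcompl i using 2 <;> ext v <;> simp [and_comm]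
    · convert h i using 2 <;> ext v <;> simp [and_comm]
  let σ : Equiv.Perm V := Equiv.ofFiberEquiv fun p => (hfib p).some
  refine ⟨σ, fun v => ?_⟩
  have hσ : (c (σ v), decide (σ v ∈ Y)) = (c v, decide (v ∈ X)) :=
    Equiv.ofFiberEquiv_map (f := fun v => (c v, decide (v ∈ X)))
      (g := fun v => (c v, decide (v ∈ Y))) (fun p => (hfib p).some) v
  simpa using hσ

/-- If `X` and `Y` have the same shape with respect to a neighborhood
diversity partition `N₁, …, N_k` of a finite simple graph `G`, then some automorphism
of `G` maps `X` onto `Y`. -/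
theorem stmt0 {V : Type} [Fintype V] [DecidableEq V] (G : SimpleGraph V)
    (k : ℕ) (N : Fin k → Finset V)
    (hpart : ∀ v : V, ∃! i : Fin k, v ∈ N i)
    (hnd : ∀ i : Fin k, ∀ u ∈ N i, ∀ v ∈ N i,
      G.neighborSet u \ {v} = G.neighborSet v \ {u})
    (X Y : Finset V)
    (hshape : ∀ i : Fin k, (X ∩ N i).card = (Y ∩ N i).card) :
    ∃ φ : G ≃g G, X.image (fun v => φ v) = Y := by
  choose c hc huniq using hpart
  have hmem : ∀ v i, c v = i ↔ v ∈ N i :=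
    fun v i => ⟨fun h => h ▸ hc v, fun h => (huniq v i h).symm⟩
  have htwin : ∀ u v w, c u = c v → w ≠ u → w ≠ v → (G.Adj u w ↔ G.Adj v w) := by
    intro u v w huv hwu hwv
    have := Set.ext_iff.1 (hnd (c v) u ((hmem _ _).1 huv) v (hc v)) w
    simpa [hwu, hwv] using this
  obtain ⟨σ, hσ⟩ := exists_perm_of_card_eq c X Y fun i => by
    simpa only [hmem, Finset.filter_mem_eq_inter] using hshape i
  refine ⟨⟨σ, fun {u v} => ?_⟩, ?_⟩
  · by_cases huv : u = v
    · simp [huv]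
    · exact adj_iff_of_twins htwin (σ.injective.ne huv) huv (hσ u).1 (hσ v).1
  · ext y
    obtain ⟨x, rfl⟩ := σ.surjective y
    simp [(hσ x).2]
end

section
/- Let G be a finite simple graph with a neighborhood diversity partition N_1, …, N_k, and let X, Y ⊆ V(G) have the same shape with respect to this partition. Then the fair vertex cost of X equals the fair vertex cost of Y; that is, the fair vertex cost of a set depends only on its shape. -/
/-!
The key object is a permutation `σ` of the vertices that preserves every class `N i` and carries
`X` onto `Y`. It exists because equal shapes force `X` and `Y`, and hence also their complements,
to meet each class in equally many vertices (`exists_perm_of_shape`). A permutation preserving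
the classes is an automorphism of `G`, since two vertices of one class have the same neighbors
apart from themselves (`adj_of_same_class`). Hence `σ` maps `N(v) ∩ X` injectively into
`N(σ v) ∩ Y`, which gives one inequality between the costs; the other follows by exchanging
`X` and `Y`.
-/

/-- Adjacency of two distinct vertices depends only on their classes `c u`, `c v`, when vertices
of the same class are twins. -/
lemma adj_of_same_class {V ι : Type} (G : SimpleGraph V) (c : V → ι)
    (hnd : ∀ u v, c u = c v → G.neighborSet u \ {v} = G.neighborSet v \ {u})
    {u v u' v' : V} (hu : c u = c u') (hv : c v = c v') (hne : u' ≠ v')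
    (h : G.Adj u v) : G.Adj u' v' := by
  have twin : ∀ a b w, c a = c b → w ≠ b → G.Adj a w → G.Adj b w := by
    intro a b w hab hwb haw
    have hw : w ∈ G.neighborSet a \ {b} := ⟨haw, hwb⟩
    rw [hnd a b hab] at hw
    exact hw.1
  by_cases huv : u' = v
  · -- All four vertices lie in one class, so `u` can be replaced by `v'` directly.
    subst huv
    exact (twin u v' u' (hu.trans hv) hne h).symm
  · exact (twin v v' u' hv hne (twin u u' v hu (Ne.symm huv) h).symm).symm

/-- Sets meeting every fiber of `c` in equally many points are exchanged by a permutation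
preserving `c`. -/
lemma exists_perm_of_shape {V ι : Type} [Fintype V] [DecidableEq V] [DecidableEq ι] (c : V → ι)
    (X Y : Finset V)
    (h : ∀ i, (X.filter fun v => c v = i).card = (Y.filter fun v => c v = i).card) :
    ∃ σ : Equiv.Perm V, ∀ v, c (σ v) = c v ∧ (σ v ∈ Y ↔ v ∈ X) := by
  have key : ∀ p : ι × Bool,
      Nonempty ({v // (c v, decide (v ∈ X)) = p} ≃ {v // (c v, decide (v ∈ Y)) = p}) := by
    rintro ⟨i, b⟩
    rw [← Fintype.card_eq, Fintype.card_subtype, Fintype.card_subtype]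
    have inside : ∀ Z : Finset V,
        (Finset.univ.filter fun v => (c v, decide (v ∈ Z)) = (i, true)) =
          Z.filter fun v => c v = i := by
      intro Z; ext v; simp [and_comm]
    have total : ∀ Z : Finset V,
        (Finset.univ.filter fun v => (c v, decide (v ∈ Z)) = (i, true)).card +
          (Finset.univ.filter fun v => (c v, decide (v ∈ Z)) = (i, false)).card =
          (Finset.univ.filter fun v => c v = i).card := by
      intro Z
      rw [← Finset.card_filter_add_card_filter_not (s := Finset.univ.filter fun v => c v = i)
        (fun v => v ∈ Z), Finset.filter_filter, Finset.filter_filter]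
      simp
    have hi := h i
    rw [← inside X, ← inside Y] at hi
    have hX := total X
    have hY := total Y
    cases b
    · omega
    · exact hi
  let e := fun p => (key p).some
  refine ⟨Equiv.ofFiberEquiv e, fun v => ?_⟩
  have := Equiv.ofFiberEquiv_map e v
  simpa using this

/-- The fair vertex cost `max_{v ∈ V} |N(v) ∩ X|` of a set depends only on
its shape with respect to a neighborhood diversity partition. -/
theorem stmt4 {V : Type} [Fintype V] [DecidableEq V] (G : SimpleGraph V)
    [DecidableRel G.Adj]
    (k : ℕ) (N : Fin k → Finset V)
    (hpart : ∀ v : V, ∃! i : Fin k, v ∈ N i)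
    (hnd : ∀ i : Fin k, ∀ u ∈ N i, ∀ v ∈ N i,
      G.neighborSet u \ {v} = G.neighborSet v \ {u})
    (X Y : Finset V)
    (hshape : ∀ i : Fin k, (X ∩ N i).card = (Y ∩ N i).card) :
    (Finset.univ.sup fun v : V => (G.neighborFinset v ∩ X).card) =
      (Finset.univ.sup fun v : V => (G.neighborFinset v ∩ Y).card) := by
  choose c hc huniq using hpart
  have hfib : ∀ (i : Fin k) (Z : Finset V), (Z.filter fun v => c v = i) = Z ∩ N i := by
    intro i Z
    ext v
    simp only [Finset.mem_filter, Finset.mem_inter]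
    exact and_congr_right fun _ => ⟨fun h => h ▸ hc v, fun h => (huniq v i h).symm⟩
  have htwin : ∀ u v, c u = c v → G.neighborSet u \ {v} = G.neighborSet v \ {u} :=
    fun u v h => hnd (c u) u (hc u) v (h ▸ hc v)
  have hle : ∀ A B : Finset V, (∀ i, (A ∩ N i).card = (B ∩ N i).card) →
      (Finset.univ.sup fun v : V => (G.neighborFinset v ∩ A).card) ≤
        (Finset.univ.sup fun v : V => (G.neighborFinset v ∩ B).card) := by
    intro A B hAB
    obtain ⟨σ, hσ⟩ := exists_perm_of_shape c A B fun i => by rw [hfib, hfib, hAB]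
    refine Finset.sup_le fun v _ => ?_
    refine le_trans ?_ (Finset.le_sup (f := fun v : V => (G.neighborFinset v ∩ B).card)
      (Finset.mem_univ (σ v)))
    refine Finset.card_le_card_of_injOn σ (fun w hw => ?_) σ.injective.injOn
    simp only [Finset.coe_inter, Set.mem_inter_iff, Finset.mem_coe,
      SimpleGraph.mem_neighborFinset] at hw ⊢
    exact ⟨adj_of_same_class G c htwin (hσ v).1.symm (hσ w).1.symm
      (σ.injective.ne hw.1.ne) hw.1, (hσ w).2.2 hw.2⟩
  exact le_antisymm (hle X Y hshape) (hle Y X fun i => (hshape i).symm)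
end

section
/- Fix natural numbers r and k and capacities n_1, …, n_k ∈ ℕ. Call a tuple s = (s_1, …, s_k) of natural numbers with s_i ≤ n_i for all i a shape, and call two shapes s, t r-equivalent if for every i either s_i = t_i, or all four of s_i, t_i, n_i − s_i, n_i − t_i are strictly greater than r. Then r-equivalence is an equivalence relation on the set of shapes and the number of its equivalence classes is at most (2r + 3)^k. -/
/-!
In one coordinate with capacity `n`, a value `s ≤ n` is either at most `r` (`r + 1` possibilities),
or above `r` with `n - s ≤ r` (at most `r + 1` possibilities), or `s` and `n - s` both exceed `r`,
and all values of the last kind are identified. This gives a code in `Fin (2 * r + 3)` that is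
complete for the coordinatewise relation (`coordCode_eq_iff`). Tuples of codes form a set with
`(2 * r + 3) ^ k` elements, and the relation is the kernel of the resulting map, hence an
equivalence.
-/

/-- The code of a value `s` in a coordinate of capacity `n`: `s` itself if `s ≤ r`, the shifted
complement `r + 1 + (n - s)` if only the complement is at most `r`, and `2 * r + 2` if both
`s` and `n - s` exceed `r`. -/
def coordCode (r n s : ℕ) : Fin (2 * r + 3) :=
  ⟨if s ≤ r then s else if n - s ≤ r then r + 1 + (n - s) else 2 * r + 2, by
    split_ifs <;> omega⟩

/-- The bounds `s ≤ n` and `t ≤ n` make the truncated complements `n - s`, `n - t` determine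
`s` and `t`. -/
lemma coordCode_eq_iff {r n s t : ℕ} (hs : s ≤ n) (ht : t ≤ n) :
    coordCode r n s = coordCode r n t ↔
      s = t ∨ (r < s ∧ r < t ∧ r < n - s ∧ r < n - t) := by
  simp only [coordCode, Fin.mk.injEq]
  split_ifs <;> omega


/-- `r`-equivalence of shapes (tuples `s : Fin k → ℕ` with `s i ≤ n i`,
where two shapes are related iff coordinatewise they are equal or all four of the values
and complementary values exceed `r`) is an equivalence relation with at most
`(2r + 3)^k` classes (witnessed by a classifying map into `Fin ((2r + 3)^k)`). -/
theorem stmt6 (k r : ℕ) (n : Fin k → ℕ)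
    (R : {s : Fin k → ℕ // ∀ i, s i ≤ n i} → {s : Fin k → ℕ // ∀ i, s i ≤ n i} → Prop)
    (hR : ∀ s t : {s : Fin k → ℕ // ∀ i, s i ≤ n i}, R s t ↔
      ∀ i : Fin k, s.1 i = t.1 i ∨
        (r < s.1 i ∧ r < t.1 i ∧ r < n i - s.1 i ∧ r < n i - t.1 i)) :
    Equivalence R ∧
      ∃ f : {s : Fin k → ℕ // ∀ i, s i ≤ n i} → Fin ((2 * r + 3) ^ k),
        ∀ s t, R s t ↔ f s = f t := by
  let f : {s : Fin k → ℕ // ∀ i, s i ≤ n i} → Fin ((2 * r + 3) ^ k) :=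
    fun s => finFunctionFinEquiv fun i => coordCode r (n i) (s.1 i)
  have hf : ∀ s t, R s t ↔ f s = f t := by
    intro s t
    rw [hR, finFunctionFinEquiv.injective.eq_iff, funext_iff]
    exact forall_congr' fun i => (coordCode_eq_iff (s.2 i) (t.2 i)).symm
  refine ⟨⟨fun s => (hf s s).2 rfl, fun h => (hf _ _).2 ((hf _ _).1 h).symm,
    fun h h' => (hf _ _).2 (((hf _ _).1 h).trans ((hf _ _).1 h'))⟩, f, hf⟩
end

section
/- Let G be a finite simple graph on n vertices with 3 | n and n ≥ 3, and let G′ be the graph obtained from G by the class/selector/dangling construction. If c : V(G) → {1, 2, 3} is an equitable proper 3-coloring of G (each color class has size exactly n/3), then the set W = { s_{v, c(v)} : v ∈ V(G) } of selector vertices has fair vertex cost in G′ exactly n/3. -/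
/-!
The map `v ↦ s_{v, c v}` is injective, so `|N(u) ∩ W|` counts the original vertices `v` for which
`s_{v, c v}` is adjacent to `u` (`card_neighborFinset_inter`). For `u = c_a` this is the size of the
color class of `a`, which is `n / 3`. For an original `u` only `v = u` qualifies, which gives at
most `1 ≤ n / 3`. Selector and dangling vertices have no selector neighbors.
-/

open scoped Classical

/-- Vertex type of the class/selector/dangling construction with `r` class vertices
(`r = 3` below): original vertices, class vertices, selector vertices, dangling
vertices. -/
inductive GV (V : Type) (r n : ℕ) : Type
  | orig (v : V)
  | cls (a : Fin r)
  | sel (v : V) (a : Fin r)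
  | dang (v : V) (i : Fin n)
  deriving DecidableEq, Fintype

/-- The graph `G′`: edges of `G` on original vertices; `{v, s_{v,a}}` and
`{s_{v,a}, c_a}`; and `{v, d_{v,i}}`. -/
noncomputable def gprime {V : Type} (G : SimpleGraph V) (r n : ℕ) :
    SimpleGraph (GV V r n) :=
  SimpleGraph.fromRel (fun x y =>
    match x, y with
    | .orig u, .orig w => G.Adj u w
    | .orig u, .sel w _ => u = w
    | .sel _ a, .cls b => a = b
    | .orig u, .dang w _ => u = w
    | _, _ => False)

/-- The fair vertex cost of `W`: `max_{u} |N(u) ∩ W|`. -/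
noncomputable def fairVCost {α : Type} [Fintype α] (H : SimpleGraph α) (W : Finset α) : ℕ :=
  Finset.univ.sup fun u => (H.neighborFinset u ∩ W).card

theorem gprime_adj_sel {V : Type} (G : SimpleGraph V) (r n : ℕ) (u : GV V r n) (v : V)
    (b : Fin r) :
    (gprime G r n).Adj u (.sel v b) ↔
      match u with
      | .orig w => w = v
      | .cls a => b = a
      | _ => False := by
  cases u <;> simp [gprime, SimpleGraph.fromRel_adj]

theorem card_neighborFinset_inter {V : Type} [Fintype V] [DecidableEq V] (G : SimpleGraph V)
    (r n : ℕ) (c : V → Fin r) (u : GV V r n) :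
    ((gprime G r n).neighborFinset u ∩
      Finset.univ.image fun v : V => GV.sel (r := r) (n := n) v (c v)).card =
    (Finset.univ.filter fun v : V => (gprime G r n).Adj u (.sel v (c v))).card := by
  rw [← Finset.card_image_of_injective (f := fun v : V => GV.sel (r := r) (n := n) v (c v))
    (Finset.univ.filter fun v : V => (gprime G r n).Adj u (.sel v (c v)))
    (fun v w h => by simpa using (GV.sel.inj h).1)]
  congr 1
  ext x
  simp only [Finset.mem_inter, SimpleGraph.mem_neighborFinset, Finset.mem_image, Finset.mem_univ,
    true_and, Finset.mem_filter]
  constructor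
  · rintro ⟨h, v, rfl⟩
    exact ⟨v, h, rfl⟩
  · rintro ⟨v, h, rfl⟩
    exact ⟨h, v, rfl⟩

/-- If `c` is an equitable proper 3-coloring of `G` (`3 ∣ n`, `n ≥ 3`),
then the set of selector vertices `{s_{v, c v} : v ∈ V}` has fair vertex cost exactly
`n / 3` in `G′`. -/
theorem stmt10 {V : Type} [Fintype V] [DecidableEq V] (G : SimpleGraph V)
    (n : ℕ) (hn : Fintype.card V = n) (hdvd : 3 ∣ n) (hn3 : 3 ≤ n)
    (c : V → Fin 3)
    (hproper : ∀ u w : V, G.Adj u w → c u ≠ c w)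
    (hequit : ∀ a : Fin 3, (Finset.univ.filter fun v : V => c v = a).card = n / 3) :
    fairVCost (gprime G 3 n)
      (Finset.univ.image fun v : V => GV.sel (r := 3) (n := n) v (c v)) = n / 3 := by
  unfold fairVCost
  apply le_antisymm
  · refine Finset.sup_le fun u _ => ?_
    have key := card_neighborFinset_inter G 3 n c u
    -- `fairVCost` intersects with the classical `DecidableEq` on vertices, `key` with the derived one.
    refine (show _ = (Finset.univ.filter fun v : V =>
      (gprime G 3 n).Adj u (.sel v (c v))).card by convert key).le.trans ?_
    simp only [gprime_adj_sel]
    cases u with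
    | orig w => simp [Finset.filter_eq]; omega
    | cls a => exact le_of_eq (by convert hequit a)
    | sel w a => simp
    | dang w i => simp
  -- Every class vertex attains the maximum; `c_0` is used.
  · refine le_trans (le_of_eq ?_) (Finset.le_sup (Finset.mem_univ (GV.cls 0)))
    have key := card_neighborFinset_inter G 3 n c (GV.cls 0)
    rw [← hequit 0]
    trans
    · exact congrArg Finset.card
        (Finset.filter_congr fun v _ => (gprime_adj_sel G 3 n (GV.cls 0) v (c v)).symm)
    · symm
      convert key
end

section
/- Let G be a finite simple graph on n vertices and let G′ be the graph obtained from G by the class/selector/dangling construction. If S ⊆ V(G) is a feedback vertex set of G (i.e. G − S is acyclic), then S ∪ {c_1, c_2, c_3} is a feedback vertex set of G′ (i.e. G′ − (S ∪ {c_1, c_2, c_3}) is acyclic). -/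
/-! A vertex on a cycle has two distinct neighbours on it. Hence if every vertex outside a set `A`
has at most one neighbour in a graph `H`, every cycle of `H` lies inside `A`, so `H` is acyclic
as soon as `H.induce A` is (`isAcyclic_of_subsingleton_neighborSet`).
Once the class vertices are removed, each selector or dangling vertex has only its original vertex
as a possible neighbour, and the remaining original vertices induce a copy of `G − S`. -/

open scoped Classical

/-- Deleting vertices of degree at most one all at once does not destroy any cycle. -/
theorem isAcyclic_of_subsingleton_neighborSet {W : Type*} (H : SimpleGraph W) (A : Set W)
    (hA : ∀ w ∉ A, (H.neighborSet w).Subsingleton) (hac : (H.induce A).IsAcyclic) :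
    H.IsAcyclic := by
  intro v c hc
  have hsupp : ∀ w ∈ c.support, w ∈ A := by
    intro w hw
    by_contra hwA
    have h2 := hc.ncard_neighborSet_toSubgraph_eq_two hw
    have h1 : (c.toSubgraph.neighborSet w).Subsingleton :=
      (hA w hwA).anti (c.toSubgraph.neighborSet_subset w)
    have := Set.ncard_le_one h1.finite |>.2 fun _ ha _ hb => h1 ha hb
    omega
  refine hac (c.induce A hsupp) ?_
  apply SimpleGraph.Walk.IsCycle.of_map (f := (SimpleGraph.Embedding.induce A).toHom)
  rwa [SimpleGraph.Walk.map_induce]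

/-- If `S` is a feedback vertex set of `G` (i.e. `G − S` is acyclic),
then `S ∪ {c_1, c_2, c_3}` is a feedback vertex set of `G′`. -/
theorem stmt11 {V : Type} [Fintype V] [DecidableEq V] (G : SimpleGraph V)
    (n : ℕ) (hn : Fintype.card V = n)
    (S : Set V) (hS : (G.induce Sᶜ).IsAcyclic) :
    ((gprime G 3 n).induce
      ({x : GV V 3 n | (∃ v ∈ S, x = GV.orig v) ∨ ∃ a : Fin 3, x = GV.cls a}ᶜ)).IsAcyclic := by
  refine isAcyclic_of_subsingleton_neighborSet _ {x | ∃ v, x.1 = GV.orig v} ?_ ?_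
  · rintro ⟨w, hw⟩ hwA ⟨x, hx⟩ hwx ⟨y, hy⟩ hwy
    have hcls : ∀ a, GV.cls a ∉
        ({x : GV V 3 n | (∃ v ∈ S, x = GV.orig v) ∨ ∃ a : Fin 3, x = GV.cls a}ᶜ) :=
      fun a h => h (Or.inr ⟨a, rfl⟩)
    rw [Subtype.mk.injEq]
    rcases w with w | w | ⟨w, i⟩ | ⟨w, i⟩ <;> rcases x with x | x | ⟨x, j⟩ | ⟨x, j⟩ <;>
      rcases y with y | y | ⟨y, k⟩ | ⟨y, k⟩ <;> first
      | exact absurd ‹_› (hcls _)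
      | simp_all [gprime]
  -- `f` sends a surviving original vertex to its label in `V`, an injective homomorphism to `G − S`.
  · choose f hf using fun x : {x : ({x : GV V 3 n | (∃ v ∈ S, x = GV.orig v) ∨
      ∃ a : Fin 3, x = GV.cls a}ᶜ : Set (GV V 3 n)) | ∃ v, x.1 = GV.orig v} => x.2
    have hfS : ∀ x, f x ∈ Sᶜ := fun x hx => x.1.2 (Or.inl ⟨f x, hx, hf x⟩)
    refine hS.comap ⟨fun x => ⟨f x, hfS x⟩, ?_⟩ ?_
    · intro x y hxy
      have h : (gprime G 3 n).Adj x.1.1 y.1.1 := hxy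
      rw [hf x, hf y] at h
      simp only [gprime, SimpleGraph.fromRel_adj] at h
      exact h.2.elim id SimpleGraph.Adj.symm
    · intro x y hxy
      have h : f x = f y := congrArg Subtype.val hxy
      exact Subtype.ext (Subtype.ext (by rw [hf x, hf y, h]))
end

section
/- Let G be a finite simple graph on n vertices with 3 | n and n ≥ 6, let G′ be the graph obtained from G by the class/selector/dangling construction, let W ⊆ V(G′) have fair vertex cost at most n/3 in G′, and let H be the subgraph of G′ induced on V(G′) \ W. If H has no isolated vertex, then W contains no original vertex, i.e. W ∩ V(G) = ∅. -/
/-!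
If an original vertex `v` lies in `W`, then every dangling vertex at `v` must lie in `W` as well:
its only neighbor in `G′` is `v`, so if it survived it would be isolated in `H`. Hence all `n`
dangling vertices at `v` are deleted neighbors of `v`, and the fair vertex cost of `W` is at least
`n > n / 3`, contradicting the bound.
-/

open scoped Classical

/-- The subgraph of `G′` induced on `V(G′) \ W`. -/
noncomputable def Hdel {V : Type} [Fintype V] [DecidableEq V] (G : SimpleGraph V)
    (r n : ℕ) (W : Finset (GV V r n)) :
    SimpleGraph ((↑W : Set (GV V r n))ᶜ : Set (GV V r n)) :=
  (gprime G r n).induce _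

/-- `v` has no neighbor in `H`. -/
def IsolatedP {α : Type} (H : SimpleGraph α) (v : α) : Prop := ∀ w, ¬ H.Adj v w

/-- A dangling vertex at `v` is a leaf of `G′`, attached to `v`. -/
theorem gprime_adj_dang {V : Type} (G : SimpleGraph V) (r n : ℕ) (v : V) (i : Fin n)
    (x : GV V r n) : (gprime G r n).Adj (GV.dang v i) x ↔ x = GV.orig v := by
  cases x <;> simp [gprime]

/-- Any set of neighbors of `u` inside `W` bounds the fair vertex cost from below. -/
theorem card_le_fairVCost {α : Type} [Fintype α] (H : SimpleGraph α) (W S : Finset α) (u : α)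
    (hS : ∀ x ∈ S, H.Adj u x ∧ x ∈ W) : S.card ≤ fairVCost H W := by
  unfold fairVCost
  refine le_trans (Finset.card_le_card ?_)
    (Finset.le_sup (f := fun u => (H.neighborFinset u ∩ W).card) (Finset.mem_univ u))
  intro x hx
  rw [Finset.mem_inter, SimpleGraph.mem_neighborFinset]
  exact hS x hx

/-- If `W ⊆ V(G′)` has fair vertex cost at most `n/3` (`3 ∣ n`, `n ≥ 6`)
and the induced subgraph `H` of `G′` on `V(G′) \ W` has no isolated vertex, then `W`
contains no original vertex. -/
theorem stmt12 {V : Type} [Fintype V] [DecidableEq V] (G : SimpleGraph V)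
    (n : ℕ) (hn : Fintype.card V = n) (hdvd : 3 ∣ n) (hn6 : 6 ≤ n)
    (W : Finset (GV V 3 n))
    (hW : fairVCost (gprime G 3 n) W ≤ n / 3)
    (hniso : ∀ x, ¬ IsolatedP (Hdel G 3 n W) x) :
    ∀ v : V, GV.orig (r := 3) (n := n) v ∉ W := by
  intro v hv
  have hdang : ∀ i : Fin n, GV.dang (r := 3) v i ∈ W := by
    intro i
    by_contra hi
    refine hniso ⟨GV.dang v i, by simpa using hi⟩ ?_
    rintro ⟨x, hx⟩ hadj
    have hxv : x = GV.orig v := (gprime_adj_dang G 3 n v i x).1 hadj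
    subst hxv
    exact hx (by simpa using hv)
  have hcost : n ≤ fairVCost (gprime G 3 n) W := by
    calc n = (Finset.univ.image (fun i : Fin n => GV.dang (r := 3) v i)).card := by
          rw [Finset.card_image_of_injective _ (fun i j h => by simpa using h)]
          simp
      _ ≤ _ := card_le_fairVCost _ _ _ (GV.orig v) (by
          intro x hx
          obtain ⟨i, -, rfl⟩ := Finset.mem_image.1 hx
          exact ⟨((gprime_adj_dang G 3 n v i _).2 rfl).symm, hdang i⟩)
  omega
end

section
/- Let G be a finite simple graph on n vertices with 3 | n and n ≥ 6, let G′ be the graph obtained from G by the class/selector/dangling construction, let W ⊆ V(G′) have fair vertex cost at most n/3 in G′, and let H be the subgraph of G′ induced on V(G′) \ W. Suppose H satisfies valid_deletion, i.e. (i) H has no isolated vertex, and (ii) every vertex v of H with original(v) has exactly one vertex a of H with belongs_to(v, a). Then W contains no class vertex, i.e. c_1, c_2, c_3 ∉ W. -/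
/-!
Write `n = 3k` with `k ≥ 2`. An original vertex `v` lying in `W` would leave its dangling vertices
isolated unless all `n > k` of them were deleted, which the fair cost at `v` forbids; hence every
original vertex survives (`orig_not_mem`), and it keeps some dangling neighbor, so it satisfies
`OriginalP` (`originalP_orig`). A surviving selector has one or two neighbors in `H`, so the only
vertices that can satisfy `ClassP` are surviving class vertices (`eq_cls_of_classP`). By
`hvalid`, every `v` belongs to some surviving `c_b`, and having no common neighbor with `c_b` forces
`s_{v,b} ∈ W`. Each `c_b` has at most `k` neighbors in `W`, so if at most two class
vertices survived there would be at most `2k < n` original vertices.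
-/

open scoped Classical

/-- `v` has exactly one neighbor in `H`. -/
def DanglingP {α : Type} (H : SimpleGraph α) (v : α) : Prop := ∃! w, H.Adj v w
/-- `v` has a neighbor `w` with `DanglingP w`. -/
def OriginalP {α : Type} (H : SimpleGraph α) (v : α) : Prop :=
  ∃ w, H.Adj v w ∧ DanglingP H w
/-- `v` has exactly two neighbors in `H`. -/
def SelectorP {α : Type} (H : SimpleGraph α) (v : α) : Prop :=
  ∃ w₁ w₂, w₁ ≠ w₂ ∧ H.Adj v w₁ ∧ H.Adj v w₂ ∧ ∀ w, H.Adj v w → w = w₁ ∨ w = w₂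
/-- none of `OriginalP`, `SelectorP`, `DanglingP` holds for `v`. -/
def ClassP {α : Type} (H : SimpleGraph α) (v : α) : Prop :=
  ¬ OriginalP H v ∧ ¬ SelectorP H v ∧ ¬ DanglingP H v
/-- `OriginalP v`, `ClassP a`, and `v`, `a` have no common neighbor in `H`. -/
def BelongsToP {α : Type} (H : SimpleGraph α) (v a : α) : Prop :=
  OriginalP H v ∧ ClassP H a ∧ ¬ ∃ w, H.Adj v w ∧ H.Adj w a

section Adjacency

variable {V : Type} (G : SimpleGraph V) {r n : ℕ}

theorem gprime_dang_iff (v : V) (i : Fin n) (x : GV V r n) :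
    (gprime G r n).Adj (.dang v i) x ↔ x = .orig v := by
  cases x <;> simp [gprime, SimpleGraph.fromRel_adj]

theorem gprime_sel_iff (v : V) (a : Fin r) (x : GV V r n) :
    (gprime G r n).Adj (.sel v a) x ↔ x = .orig v ∨ x = .cls a := by
  cases x <;> simp [gprime, SimpleGraph.fromRel_adj, eq_comm]

end Adjacency

section Deletion

variable {V : Type} [Fintype V] [DecidableEq V] {G : SimpleGraph V} {r n : ℕ}
  {W : Finset (GV V r n)}

theorem card_le_of_fairVCost {k : ℕ} (hW : fairVCost (gprime G r n) W ≤ k) (u : GV V r n)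
    (S : Finset (GV V r n)) (hS : ∀ x ∈ S, (gprime G r n).Adj u x ∧ x ∈ W) : S.card ≤ k := by
  refine (Finset.card_le_card fun x hx => ?_).trans (Finset.sup_le_iff.1 hW u (Finset.mem_univ u))
  simpa using hS x hx

/-- A cost below `n` cannot pay for deleting all `n` dangling neighbors of `v`. -/
theorem exists_dang_not_mem {k : ℕ} (hW : fairVCost (gprime G r n) W ≤ k) (hk : k < n) (v : V) :
    ∃ i : Fin n, GV.dang v i ∉ W := by
  by_contra! h
  have := card_le_of_fairVCost hW (.orig v)
    (Finset.univ.image fun i : Fin n => GV.dang v i) (by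
      intro x hx
      obtain ⟨i, -, rfl⟩ := Finset.mem_image.1 hx
      exact ⟨((gprime_dang_iff G v i _).2 rfl).symm, h i⟩)
  rw [Finset.card_image_of_injective _ (fun i j hij => by simpa using hij)] at this
  simp at this
  omega

theorem orig_not_mem {k : ℕ} (hW : fairVCost (gprime G r n) W ≤ k) (hk : k < n)
    (hniso : ∀ x, ¬ IsolatedP (Hdel G r n W) x) (v : V) : GV.orig v ∉ W := by
  intro hv
  obtain ⟨i, hi⟩ := exists_dang_not_mem hW hk v
  refine hniso ⟨.dang v i, by simpa using hi⟩ ?_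
  rintro ⟨w, hw⟩ hadj
  obtain rfl := (gprime_dang_iff G v i w).1 hadj
  exact hw hv

theorem danglingP_dang (v : V) (hv : GV.orig v ∉ W) (i : Fin n) (hi) :
    DanglingP (Hdel G r n W) ⟨.dang v i, hi⟩ :=
  ⟨⟨.orig v, by simpa using hv⟩, (gprime_dang_iff G v i _).2 rfl,
    fun w hw => Subtype.ext ((gprime_dang_iff G v i _).1 hw)⟩

theorem originalP_orig {k : ℕ} (hW : fairVCost (gprime G r n) W ≤ k) (hk : k < n)
    (v : V) (hv) : OriginalP (Hdel G r n W) ⟨.orig v, hv⟩ := by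
  obtain ⟨i, hi⟩ := exists_dang_not_mem hW hk v
  exact ⟨⟨.dang v i, by simpa using hi⟩, ((gprime_dang_iff G v i _).2 rfl).symm,
    danglingP_dang v (by simpa using hv) i _⟩

/-- A surviving selector is dangling or a selector in `H`, according to whether its class vertex
was deleted. -/
theorem eq_cls_of_classP {k : ℕ} (hW : fairVCost (gprime G r n) W ≤ k) (hk : k < n)
    (hniso : ∀ x, ¬ IsolatedP (Hdel G r n W) x) (x) (hx : ClassP (Hdel G r n W) x) :
    ∃ b, x.1 = GV.cls b := by
  obtain ⟨h1, h2, h3⟩ := hx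
  obtain ⟨x, hxW⟩ := x
  cases x with
  | orig v => exact absurd (originalP_orig hW hk v hxW) h1
  | cls b => exact ⟨b, rfl⟩
  | dang v i => exact absurd (danglingP_dang v (orig_not_mem hW hk hniso v) i hxW) h3
  | sel v b =>
    have hv := orig_not_mem hW hk hniso v
    exfalso
    by_cases hb : GV.cls b ∈ W
    · refine h3 ⟨⟨.orig v, by simpa using hv⟩, (gprime_sel_iff G v b _).2 (Or.inl rfl), ?_⟩
      rintro ⟨w, hw⟩ hadj
      rcases (gprime_sel_iff G v b w).1 hadj with rfl | rfl
      · rfl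
      · exact absurd hb hw
    · refine h2 ⟨⟨.orig v, by simpa using hv⟩, ⟨.cls b, by simpa using hb⟩, by simp,
        (gprime_sel_iff G v b _).2 (Or.inl rfl), (gprime_sel_iff G v b _).2 (Or.inr rfl), ?_⟩
      rintro ⟨w, hw⟩ hadj
      rcases (gprime_sel_iff G v b w).1 hadj with rfl | rfl
      · exact Or.inl rfl
      · exact Or.inr rfl

theorem card_sel_mem_le {k : ℕ} (hW : fairVCost (gprime G r n) W ≤ k) (b : Fin r) :
    (Finset.univ.filter fun v : V => GV.sel v b ∈ W).card ≤ k := by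
  rw [← Finset.card_image_of_injective (f := fun v : V => (GV.sel v b : GV V r n)) _
    (fun v w h => by simpa using h)]
  refine card_le_of_fairVCost hW (.cls b) _ fun x hx => ?_
  obtain ⟨v, hv, rfl⟩ := Finset.mem_image.1 hx
  exact ⟨((gprime_sel_iff G v b _).2 (Or.inr rfl)).symm, by simpa using hv⟩

end Deletion

/-- If `W ⊆ V(G′)` has fair vertex cost at most `n/3` (`3 ∣ n`, `n ≥ 6`)
and the induced subgraph `H` of `G′` on `V(G′) \ W` satisfies `valid_deletion` (no
isolated vertex; every original vertex belongs to exactly one class vertex), then `W`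
contains no class vertex. -/
theorem stmt13 {V : Type} [Fintype V] [DecidableEq V] (G : SimpleGraph V)
    (n : ℕ) (hn : Fintype.card V = n) (hdvd : 3 ∣ n) (hn6 : 6 ≤ n)
    (W : Finset (GV V 3 n))
    (hW : fairVCost (gprime G 3 n) W ≤ n / 3)
    (hniso : ∀ x, ¬ IsolatedP (Hdel G 3 n W) x)
    (hvalid : ∀ v, OriginalP (Hdel G 3 n W) v → ∃! a, BelongsToP (Hdel G 3 n W) v a) :
    ∀ a : Fin 3, GV.cls (V := V) (n := n) a ∉ W := by
  intro a ha
  have hk : n / 3 < n := by omega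
  have key : ∀ v : V, ∃ b ≠ a, GV.sel v b ∈ W := by
    intro v
    have hv := orig_not_mem hW hk hniso v
    obtain ⟨⟨x, hxW⟩, ⟨-, hcls, hno⟩, -⟩ :=
      hvalid ⟨.orig v, by simpa using hv⟩ (originalP_orig hW hk v _)
    obtain ⟨b, rfl⟩ : ∃ b, x = GV.cls b := eq_cls_of_classP hW hk hniso _ hcls
    refine ⟨b, ?_, ?_⟩
    · rintro rfl
      exact hxW ha
    · by_contra hs
      exact hno ⟨⟨.sel v b, by simpa using hs⟩,
        ((gprime_sel_iff G v b _).2 (Or.inl rfl)).symm, (gprime_sel_iff G v b _).2 (Or.inr rfl)⟩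
  -- If `c_a` were deleted, the two remaining class vertices would have to account for every `v`.
  have hcover : (Finset.univ : Finset V) ⊆
      (Finset.univ.erase a).biUnion fun b => Finset.univ.filter fun v : V => GV.sel v b ∈ W := by
    intro v _
    obtain ⟨b, hb, hs⟩ := key v
    simpa using ⟨b, hb, hs⟩
  have h1 := Finset.card_le_card hcover
  have h2 := Finset.card_biUnion_le_card_mul (Finset.univ.erase a)
    (fun b => Finset.univ.filter fun v : V => GV.sel v b ∈ W) (n / 3)
    (fun b _ => card_sel_mem_le hW b)
  rw [Finset.card_univ, hn] at h1
  rw [Finset.card_erase_of_mem (Finset.mem_univ a), Finset.card_univ, Fintype.card_fin] at h2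
  omega
end

section
/- Let G be a finite simple graph on n vertices with 3 | n and n ≥ 6, and let G′ be the graph obtained from G by the class/selector/dangling construction. Then G admits an equitable proper 3-coloring if and only if there exists a set W ⊆ V(G′) of fair vertex cost at most n/3 in G′ such that the induced subgraph H of G′ on V(G′) \ W satisfies all of the following: (i) H has no isolated vertex; (ii) every vertex v of H with original(v) has exactly one vertex a of H with belongs_to(v, a); (iii) for all vertices v, w of H with same_class(v, w), v and w are not adjacent in H. -/
/-!
The argument reads off from `H` what each kind of vertex of `G′` has become. Suppose that `W`
contains no original vertex, at most `n / 3` dangling vertices at each `v` and at most `n / 3`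
selectors of each class (`Sparse`). Every original vertex then keeps at least two dangling
neighbors, every surviving dangling vertex has degree one, a surviving selector has degree one or
two according to whether its class vertex was deleted, and a surviving class vertex has at least
three neighbors, all of degree two. Hence the predicates `OriginalP` and `ClassP` define exactly
the original vertices and the surviving class vertices (`originalP_iff`, `classP_iff`), and `v`
belongs to `c_b` precisely when `s_{v,b}` was deleted (`belongsToP_iff`).

From an equitable coloring `c` one takes `W = {s_{v,c(v)}}`. Conversely, a set `W` of fair cost at
most `n / 3` that leaves no isolated vertex contains no original vertex, since otherwise it would
contain all `n` dangling neighbors of that vertex; so it is sparse. Each `v` belongs to a unique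
class, and this is a proper coloring whose three color classes have at most `n / 3` elements each
and `n` elements in total, so each has exactly `n / 3`.
-/

open scoped Classical

/-- `v`, `w` are original vertices belonging to a common class vertex. -/
def SameClassP {α : Type} (H : SimpleGraph α) (v w : α) : Prop :=
  OriginalP H v ∧ OriginalP H w ∧ ∃ a, ClassP H a ∧ BelongsToP H v a ∧ BelongsToP H w a

/-! ### Adjacency in `G′` -/

section Adjacency

variable {V : Type} (G : SimpleGraph V) {r n : ℕ}

@[simp] lemma gprime_orig_orig (u w : V) :
    (gprime G r n).Adj (.orig u) (.orig w) ↔ G.Adj u w := by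
  simp only [gprime, SimpleGraph.fromRel_adj, ne_eq, GV.orig.injEq]
  constructor
  · rintro ⟨-, h | h⟩
    · exact h
    · exact h.symm
  · intro h
    exact ⟨h.ne, Or.inl h⟩

@[simp] lemma gprime_orig_sel (u w : V) (a : Fin r) :
    (gprime G r n).Adj (.orig u) (.sel w a) ↔ u = w := by
  simp [gprime]

@[simp] lemma gprime_sel_orig (u w : V) (a : Fin r) :
    (gprime G r n).Adj (.sel w a) (.orig u) ↔ u = w := by
  simp [gprime]

@[simp] lemma gprime_orig_dang (u w : V) (i : Fin n) :
    (gprime G r n).Adj (.orig u) (.dang w i) ↔ u = w := by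
  simp [gprime]

@[simp] lemma gprime_dang_orig (u w : V) (i : Fin n) :
    (gprime G r n).Adj (.dang w i) (.orig u) ↔ u = w := by
  simp [gprime]

@[simp] lemma gprime_sel_cls (w : V) (a b : Fin r) :
    (gprime G r n).Adj (.sel w a) (.cls b) ↔ a = b := by
  simp [gprime]

@[simp] lemma gprime_cls_sel (w : V) (a b : Fin r) :
    (gprime G r n).Adj (.cls b) (.sel w a) ↔ a = b := by
  simp [gprime]

@[simp] lemma gprime_orig_cls (u : V) (a : Fin r) :
    ¬ (gprime G r n).Adj (.orig u) (.cls a) := by simp [gprime]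

@[simp] lemma gprime_cls_orig (u : V) (a : Fin r) :
    ¬ (gprime G r n).Adj (.cls a) (.orig u) := by simp [gprime]

@[simp] lemma gprime_cls_cls (a b : Fin r) :
    ¬ (gprime G r n).Adj (.cls a) (.cls b) := by simp [gprime]

@[simp] lemma gprime_cls_dang (w : V) (i : Fin n) (a : Fin r) :
    ¬ (gprime G r n).Adj (.cls a) (.dang w i) := by simp [gprime]

@[simp] lemma gprime_dang_cls (w : V) (i : Fin n) (a : Fin r) :
    ¬ (gprime G r n).Adj (.dang w i) (.cls a) := by simp [gprime]

@[simp] lemma gprime_sel_sel (u w : V) (a b : Fin r) :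
    ¬ (gprime G r n).Adj (.sel u a) (.sel w b) := by simp [gprime]

@[simp] lemma gprime_sel_dang (u w : V) (a : Fin r) (i : Fin n) :
    ¬ (gprime G r n).Adj (.sel u a) (.dang w i) := by simp [gprime]

@[simp] lemma gprime_dang_sel (u w : V) (a : Fin r) (i : Fin n) :
    ¬ (gprime G r n).Adj (.dang w i) (.sel u a) := by simp [gprime]

@[simp] lemma gprime_dang_dang (u w : V) (i j : Fin n) :
    ¬ (gprime G r n).Adj (.dang u i) (.dang w j) := by simp [gprime]

end Adjacency

/-! ### The vertices of `H` for sparse `W` -/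

section Reading

variable {V : Type} [Fintype V] [DecidableEq V] {G : SimpleGraph V} {n : ℕ}
  {W : Finset (GV V 3 n)}

@[simp] lemma hdel_adj (x y : ((↑W : Set (GV V 3 n))ᶜ : Set (GV V 3 n))) :
    (Hdel G 3 n W).Adj x y ↔ (gprime G 3 n).Adj x.1 y.1 := Iff.rfl

/-- `W` contains no original vertex, at most `n / 3` of the dangling vertices at each original
vertex, and at most `n / 3` of the selectors of each class. -/
structure Sparse (W : Finset (GV V 3 n)) : Prop where
  orig : ∀ v, GV.orig v ∉ W
  dang : ∀ v, (Finset.univ.filter fun i : Fin n => GV.dang v i ∈ W).card ≤ n / 3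
  sel : ∀ a, (Finset.univ.filter fun v : V => GV.sel v a ∈ W).card ≤ n / 3

lemma Sparse.exists_dang (hW : Sparse W) (hn6 : 6 ≤ n) (v : V) :
    ∃ i j : Fin n, i ≠ j ∧ GV.dang v i ∉ W ∧ GV.dang v j ∉ W := by
  have h1 := hW.dang v
  have h2 := Finset.card_filter_add_card_filter_not (s := (Finset.univ : Finset (Fin n)))
    (fun i : Fin n => GV.dang v i ∈ W)
  rw [Finset.card_univ, Fintype.card_fin] at h2
  have h3 : 1 < (Finset.univ.filter fun i : Fin n => ¬ GV.dang v i ∈ W).card := by omega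
  obtain ⟨i, hi, j, hj, hij⟩ := Finset.one_lt_card.1 h3
  exact ⟨i, j, hij, (Finset.mem_filter.1 hi).2, (Finset.mem_filter.1 hj).2⟩

lemma Sparse.exists_sel (hW : Sparse W) (hn : Fintype.card V = n) (hn6 : 6 ≤ n) (a : Fin 3) :
    ∃ u v w : V, u ≠ v ∧ u ≠ w ∧ v ≠ w ∧
      GV.sel u a ∉ W ∧ GV.sel v a ∉ W ∧ GV.sel w a ∉ W := by
  have h1 := hW.sel a
  have h2 := Finset.card_filter_add_card_filter_not (s := (Finset.univ : Finset V))
    (fun v : V => GV.sel v a ∈ W)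
  rw [Finset.card_univ, hn] at h2
  have h3 : 2 < (Finset.univ.filter fun v : V => ¬ GV.sel v a ∈ W).card := by omega
  obtain ⟨u, v, w, hu, hv, hw, h⟩ := Finset.two_lt_card_iff.1 h3
  exact ⟨u, v, w, h.1, h.2.1, h.2.2, (Finset.mem_filter.1 hu).2, (Finset.mem_filter.1 hv).2,
    (Finset.mem_filter.1 hw).2⟩

lemma dang_danglingP (hW : Sparse W) (v : V) (i : Fin n) (h : GV.dang v i ∉ W) :
    DanglingP (Hdel G 3 n W) ⟨.dang v i, h⟩ := by
  refine ⟨⟨.orig v, hW.orig v⟩, by simp, ?_⟩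
  rintro ⟨y, hy⟩ hadj
  cases y <;> simp at hadj
  subst hadj
  rfl

lemma orig_originalP (hW : Sparse W) (hn6 : 6 ≤ n) (v : V) (h : GV.orig v ∉ W) :
    OriginalP (Hdel G 3 n W) ⟨.orig v, h⟩ := by
  obtain ⟨i, j, -, hi, -⟩ := hW.exists_dang hn6 v
  exact ⟨⟨.dang v i, hi⟩, by simp, dang_danglingP hW v i hi⟩

lemma orig_not_danglingP (hW : Sparse W) (hn6 : 6 ≤ n) (v : V) (h : GV.orig v ∉ W) :
    ¬ DanglingP (Hdel G 3 n W) ⟨.orig v, h⟩ := by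
  obtain ⟨i, j, hij, hi, hj⟩ := hW.exists_dang hn6 v
  intro hd
  have := hd.unique (y₁ := ⟨.dang v i, hi⟩) (y₂ := ⟨.dang v j, hj⟩) (by simp) (by simp)
  simp at this
  exact hij this

/-- A selector whose class vertex survives has two neighbors; otherwise it has one. -/
lemma sel_not_classP (hW : Sparse W) (v : V) (a : Fin 3) (h : GV.sel v a ∉ W) :
    ¬ ClassP (Hdel G 3 n W) ⟨.sel v a, h⟩ := by
  rintro ⟨-, hs, hd⟩
  by_cases ha : GV.cls a ∈ W
  · refine hd ⟨⟨.orig v, hW.orig v⟩, by simp, ?_⟩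
    rintro ⟨y, hy⟩ hadj
    cases y <;> simp at hadj
    · subst hadj
      rfl
    · subst hadj
      exact absurd ha hy
  · refine hs ⟨⟨.orig v, hW.orig v⟩, ⟨.cls a, ha⟩, by simp, by simp, by simp, ?_⟩
    rintro ⟨y, hy⟩ hadj
    cases y <;> simp at hadj
    · subst hadj
      exact Or.inl rfl
    · subst hadj
      exact Or.inr rfl

lemma cls_not_originalP (hW : Sparse W) (a : Fin 3) (h : GV.cls a ∉ W) :
    ¬ OriginalP (Hdel G 3 n W) ⟨.cls a, h⟩ := by
  rintro ⟨⟨y, hy⟩, hadj, hd⟩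
  cases y <;> simp at hadj
  rename_i v b
  subst hadj
  have := hd.unique (y₁ := ⟨.orig v, hW.orig v⟩) (y₂ := ⟨.cls b, h⟩) (by simp) (by simp)
  simp at this

lemma cls_not_danglingP (hW : Sparse W) (hn : Fintype.card V = n) (hn6 : 6 ≤ n) (a : Fin 3)
    (h : GV.cls a ∉ W) : ¬ DanglingP (Hdel G 3 n W) ⟨.cls a, h⟩ := by
  obtain ⟨u, v, w, huv, -, -, hu, hv, -⟩ := hW.exists_sel hn hn6 a
  intro hd
  have := hd.unique (y₁ := ⟨.sel u a, hu⟩) (y₂ := ⟨.sel v a, hv⟩) (by simp) (by simp)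
  simp at this
  exact huv this

lemma cls_classP (hW : Sparse W) (hn : Fintype.card V = n) (hn6 : 6 ≤ n) (a : Fin 3)
    (h : GV.cls a ∉ W) : ClassP (Hdel G 3 n W) ⟨.cls a, h⟩ := by
  refine ⟨cls_not_originalP hW a h, ?_, cls_not_danglingP hW hn hn6 a h⟩
  obtain ⟨u, v, w, huv, huw, hvw, hu, hv, hw⟩ := hW.exists_sel hn hn6 a
  rintro ⟨x, y, -, -, -, hall⟩
  have h1 := hall ⟨.sel u a, hu⟩ (by simp)
  have h2 := hall ⟨.sel v a, hv⟩ (by simp)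
  have h3 := hall ⟨.sel w a, hw⟩ (by simp)
  -- Two of the three selectors would have to coincide.
  have key : ∀ (s t : V) (hs : GV.sel s a ∉ W) (ht : GV.sel t a ∉ W)
      (z : ((↑W : Set (GV V 3 n))ᶜ : Set (GV V 3 n))),
      ⟨.sel s a, hs⟩ = z → ⟨.sel t a, ht⟩ = z → s = t := by
    intro s t hs ht z h4 h5
    simpa using h4.trans h5.symm
  rcases h1 with h1 | h1 <;> rcases h2 with h2 | h2 <;> rcases h3 with h3 | h3 <;>
    first
    | exact huv (key _ _ _ _ _ h1 h2)
    | exact huw (key _ _ _ _ _ h1 h3)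
    | exact hvw (key _ _ _ _ _ h2 h3)

lemma classP_iff (hW : Sparse W) (hn : Fintype.card V = n) (hn6 : 6 ≤ n)
    (x : ((↑W : Set (GV V 3 n))ᶜ : Set (GV V 3 n))) :
    ClassP (Hdel G 3 n W) x ↔ ∃ a, x.1 = .cls a := by
  obtain ⟨x, hx⟩ := x
  constructor
  · intro h
    cases x with
    | orig v => exact absurd (orig_originalP hW hn6 v hx) h.1
    | cls a => exact ⟨a, rfl⟩
    | sel v a => exact absurd h (sel_not_classP hW v a hx)
    | dang v i => exact absurd (dang_danglingP hW v i hx) h.2.2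
  · rintro ⟨a, rfl⟩
    exact cls_classP hW hn hn6 a hx

lemma originalP_iff (hW : Sparse W) (hn : Fintype.card V = n) (hn6 : 6 ≤ n)
    (x : ((↑W : Set (GV V 3 n))ᶜ : Set (GV V 3 n))) :
    OriginalP (Hdel G 3 n W) x ↔ ∃ v, x.1 = .orig v := by
  obtain ⟨x, hx⟩ := x
  constructor
  · intro h
    cases x with
    | orig v => exact ⟨v, rfl⟩
    | cls a => exact absurd h (cls_not_originalP hW a hx)
    | sel v a =>
      obtain ⟨⟨y, hy⟩, hadj, hd⟩ := h
      cases y <;> simp at hadj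
      · exact absurd hd (orig_not_danglingP hW hn6 _ hy)
      · exact absurd hd (cls_not_danglingP hW hn hn6 _ hy)
    | dang v i =>
      obtain ⟨⟨y, hy⟩, hadj, hd⟩ := h
      cases y <;> simp at hadj
      exact absurd hd (orig_not_danglingP hW hn6 _ hy)
  · rintro ⟨v, rfl⟩
    exact orig_originalP hW hn6 v hx

/-- The only possible common neighbor of `v` and `c_b` is `s_{v,b}`. -/
lemma belongsToP_iff (hW : Sparse W) (hn : Fintype.card V = n) (hn6 : 6 ≤ n)
    (x a : ((↑W : Set (GV V 3 n))ᶜ : Set (GV V 3 n))) :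
    BelongsToP (Hdel G 3 n W) x a ↔
      ∃ v b, x.1 = .orig v ∧ a.1 = .cls b ∧ GV.sel v b ∈ W := by
  unfold BelongsToP
  rw [originalP_iff hW hn hn6, classP_iff hW hn hn6]
  obtain ⟨x, hx⟩ := x
  obtain ⟨a, ha⟩ := a
  constructor
  · rintro ⟨⟨v, rfl⟩, ⟨b, rfl⟩, h⟩
    refine ⟨v, b, rfl, rfl, ?_⟩
    by_contra hs
    exact h ⟨⟨.sel v b, hs⟩, by simp, by simp⟩
  · rintro ⟨v, b, rfl, rfl, h⟩
    refine ⟨⟨v, rfl⟩, ⟨b, rfl⟩, ?_⟩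
    rintro ⟨⟨y, hy⟩, h1, h2⟩
    cases y <;> simp at h1 h2
    subst h1 h2
    exact hy h

/-! ### Sparsity from fair cost, and the set of a coloring -/

lemma card_inter_le_of_fairVCost {k : ℕ} (h : fairVCost (gprime G 3 n) W ≤ k) (u : GV V 3 n)
    (S : Finset (GV V 3 n)) (hS : ∀ x ∈ S, (gprime G 3 n).Adj u x ∧ x ∈ W) : S.card ≤ k := by
  refine le_trans (Finset.card_le_card ?_) (Finset.sup_le_iff.1 h u (Finset.mem_univ u))
  intro x hx
  -- `fairVCost` takes intersections with the classical decidable equality.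
  refine (@Finset.mem_inter _ (_) _ _ _).2 ⟨?_, (hS x hx).2⟩
  exact (SimpleGraph.mem_neighborFinset _ _ _).2 (hS x hx).1

/-- If an original vertex were deleted, all its `n` dangling neighbors would have to be deleted as
well, so as not to be isolated. -/
lemma sparse_of_fairVCost (hn6 : 6 ≤ n) (hcost : fairVCost (gprime G 3 n) W ≤ n / 3)
    (hiso : ∀ x, ¬ IsolatedP (Hdel G 3 n W) x) : Sparse W := by
  have hdang : ∀ v, (Finset.univ.filter fun i : Fin n => GV.dang v i ∈ W).card ≤ n / 3 := by
    intro v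
    rw [← Finset.card_image_of_injective (f := fun i : Fin n => (GV.dang v i : GV V 3 n)) _
      (fun i j hij => by simpa using hij)]
    refine card_inter_le_of_fairVCost hcost (.orig v) _ ?_
    intro x hx
    simp only [Finset.mem_image, Finset.mem_filter, Finset.mem_univ, true_and] at hx
    obtain ⟨i, hi, rfl⟩ := hx
    exact ⟨by simp, hi⟩
  refine ⟨fun v hv => ?_, hdang, fun a => ?_⟩
  · have hall : ∀ i : Fin n, GV.dang v i ∈ W := by
      intro i
      by_contra hi
      refine hiso ⟨.dang v i, hi⟩ ?_
      rintro ⟨y, hy⟩ hadj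
      cases y <;> simp at hadj
      subst hadj
      exact hy hv
    have h1 := hdang v
    rw [Finset.filter_true_of_mem (fun i _ => hall i), Finset.card_univ, Fintype.card_fin] at h1
    omega
  · rw [← Finset.card_image_of_injective (f := fun v : V => (GV.sel v a : GV V 3 n)) _
      (fun i j hij => by simpa using hij)]
    refine card_inter_le_of_fairVCost hcost (.cls a) _ ?_
    intro x hx
    simp only [Finset.mem_image, Finset.mem_filter, Finset.mem_univ, true_and] at hx
    obtain ⟨i, hi, rfl⟩ := hx
    exact ⟨by simp, hi⟩

/-- The set of selectors `s_{v,c(v)}` attached to a coloring `c`. -/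
noncomputable def colorSet (n : ℕ) (c : V → Fin 3) : Finset (GV V 3 n) :=
  Finset.univ.image fun v => GV.sel v (c v)

lemma sel_mem_colorSet (c : V → Fin 3) (v : V) (a : Fin 3) :
    (GV.sel v a : GV V 3 n) ∈ colorSet n c ↔ c v = a := by
  simp [colorSet]

lemma sparse_colorSet {c : V → Fin 3}
    (hc : ∀ a : Fin 3, (Finset.univ.filter fun v : V => c v = a).card = n / 3) :
    Sparse (colorSet n c) := by
  refine ⟨by simp [colorSet], by simp [colorSet], fun a => ?_⟩
  simp only [sel_mem_colorSet]
  exact (hc a).le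

lemma fairVCost_colorSet (hn6 : 6 ≤ n) {c : V → Fin 3}
    (hc : ∀ a : Fin 3, (Finset.univ.filter fun v : V => c v = a).card = n / 3) :
    fairVCost (gprime G 3 n) (colorSet n c) ≤ n / 3 := by
  refine Finset.sup_le fun u _ => ?_
  cases u with
  | orig v =>
    refine le_trans (Finset.card_le_card (t := {GV.sel v (c v)}) fun x hx => ?_) ?_
    · simp only [Finset.mem_inter, SimpleGraph.mem_neighborFinset, colorSet, Finset.mem_image,
        Finset.mem_univ, true_and] at hx
      obtain ⟨h, w, rfl⟩ := hx
      simp at h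
      simp [h]
    · rw [Finset.card_singleton]
      omega
  | cls a =>
    rw [← hc a, ← Finset.card_image_of_injective (f := fun v : V => (GV.sel v a : GV V 3 n)) _
      (fun i j hij => by simpa using hij)]
    refine Finset.card_le_card fun x hx => ?_
    simp only [Finset.mem_inter, SimpleGraph.mem_neighborFinset, colorSet, Finset.mem_image,
      Finset.mem_univ, true_and] at hx
    obtain ⟨h, w, rfl⟩ := hx
    simp at h
    simp [h]
  | sel v a =>
    rw [Finset.card_eq_zero.2]
    · exact Nat.zero_le _
    ext x
    simp only [Finset.mem_inter, SimpleGraph.mem_neighborFinset, colorSet, Finset.mem_image,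
      Finset.mem_univ, true_and, Finset.notMem_empty, iff_false]
    rintro ⟨h, w, rfl⟩
    simp at h
  | dang v i =>
    rw [Finset.card_eq_zero.2]
    · exact Nat.zero_le _
    ext x
    simp only [Finset.mem_inter, SimpleGraph.mem_neighborFinset, colorSet, Finset.mem_image,
      Finset.mem_univ, true_and, Finset.notMem_empty, iff_false]
    rintro ⟨h, w, rfl⟩
    simp at h

lemma not_isolatedP (hW : Sparse W) (hn : Fintype.card V = n) (hn6 : 6 ≤ n)
    (x : ((↑W : Set (GV V 3 n))ᶜ : Set (GV V 3 n))) : ¬ IsolatedP (Hdel G 3 n W) x := by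
  obtain ⟨x, hx⟩ := x
  intro h
  cases x with
  | orig v =>
    obtain ⟨i, -, -, hi, -⟩ := hW.exists_dang hn6 v
    exact h ⟨.dang v i, hi⟩ (by simp)
  | cls a =>
    obtain ⟨u, -, -, -, -, -, hu, -⟩ := hW.exists_sel hn hn6 a
    exact h ⟨.sel u a, hu⟩ (by simp)
  | sel v a => exact h ⟨.orig v, hW.orig v⟩ (by simp)
  | dang v i => exact h ⟨.orig v, hW.orig v⟩ (by simp)

end Reading

/-- For `3 ∣ n`, `n ≥ 6`, the graph `G` admits an equitable proper
3-coloring iff there is a set `W ⊆ V(G′)` of fair vertex cost at most `n/3` such that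
the induced subgraph `H` of `G′` on `V(G′) \ W` has no isolated vertex, every original
vertex of `H` belongs to exactly one class vertex, and no two original vertices of the
same class are adjacent in `H`. -/
theorem stmt14 {V : Type} [Fintype V] [DecidableEq V] (G : SimpleGraph V)
    (n : ℕ) (hn : Fintype.card V = n) (hdvd : 3 ∣ n) (hn6 : 6 ≤ n) :
    (∃ c : V → Fin 3, (∀ u w : V, G.Adj u w → c u ≠ c w) ∧
        ∀ a : Fin 3, (Finset.univ.filter fun v : V => c v = a).card = n / 3) ↔
    (∃ W : Finset (GV V 3 n),
        fairVCost (gprime G 3 n) W ≤ n / 3 ∧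
        (∀ x, ¬ IsolatedP (Hdel G 3 n W) x) ∧
        (∀ v, OriginalP (Hdel G 3 n W) v → ∃! a, BelongsToP (Hdel G 3 n W) v a) ∧
        (∀ v w, SameClassP (Hdel G 3 n W) v w → ¬ (Hdel G 3 n W).Adj v w)) := by
  constructor
  · rintro ⟨c, hproper, hc⟩
    have hW : Sparse (colorSet n c) := sparse_colorSet hc
    refine ⟨colorSet n c, fairVCost_colorSet hn6 hc, not_isolatedP hW hn hn6, ?_, ?_⟩
    · intro v hv
      obtain ⟨u, hu⟩ := (originalP_iff hW hn hn6 v).1 hv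
      refine ⟨⟨.cls (c u), by simp [colorSet]⟩, ?_, ?_⟩
      · exact (belongsToP_iff hW hn hn6 _ _).2 ⟨u, c u, hu, rfl, by rw [sel_mem_colorSet]⟩
      · rintro ⟨a, ha⟩ hb
        obtain ⟨u', b, h1, h2, h3⟩ := (belongsToP_iff hW hn hn6 _ _).1 hb
        rw [sel_mem_colorSet] at h3
        rw [hu] at h1
        cases h1
        dsimp only at h2
        subst h2
        subst h3
        rfl
    · rintro v w ⟨-, -, a, -, hv, hw⟩ hadj
      obtain ⟨u₁, b₁, h1, h2, h3⟩ := (belongsToP_iff hW hn hn6 _ _).1 hv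
      obtain ⟨u₂, b₂, h4, h5, h6⟩ := (belongsToP_iff hW hn hn6 _ _).1 hw
      rw [sel_mem_colorSet] at h3 h6
      rw [h2] at h5
      cases h5
      rw [hdel_adj, h1, h4, gprime_orig_orig] at hadj
      exact hproper _ _ hadj (h3.trans h6.symm)
  · rintro ⟨W, hcost, hiso, huniq, hsame⟩
    have hW : Sparse W := sparse_of_fairVCost hn6 hcost hiso
    have hex : ∀ v, ∃ b : Fin 3, GV.cls b ∉ W ∧ GV.sel v b ∈ W := by
      intro v
      obtain ⟨⟨a, ha⟩, hb, -⟩ := huniq ⟨.orig v, hW.orig v⟩ (orig_originalP hW hn6 v _)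
      obtain ⟨u, b, h1, h2, h3⟩ := (belongsToP_iff hW hn hn6 _ _).1 hb
      cases h1
      dsimp only at h2
      subst h2
      exact ⟨b, ha, h3⟩
    choose c hcls hsel using hex
    refine ⟨c, fun u w hadj huw => ?_, ?_⟩
    · have hu : BelongsToP (Hdel G 3 n W) ⟨.orig u, hW.orig u⟩ ⟨.cls (c u), hcls u⟩ :=
        (belongsToP_iff hW hn hn6 _ _).2 ⟨u, c u, rfl, rfl, hsel u⟩
      have hw : BelongsToP (Hdel G 3 n W) ⟨.orig w, hW.orig w⟩ ⟨.cls (c u), hcls u⟩ :=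
        (belongsToP_iff hW hn hn6 _ _).2 ⟨w, c u, rfl, rfl, huw ▸ hsel w⟩
      exact hsame _ _ ⟨hu.1, hw.1, _, hu.2.1, hu, hw⟩ (by simpa using hadj)
    · have hle : ∀ a : Fin 3, (Finset.univ.filter fun v : V => c v = a).card ≤ n / 3 := by
        intro a
        refine le_trans (Finset.card_le_card ?_) (hW.sel a)
        intro v hv
        simp only [Finset.mem_filter, Finset.mem_univ, true_and] at hv ⊢
        exact hv ▸ hsel v
      have hsum := Finset.card_eq_sum_card_fiberwise (f := c) (s := Finset.univ)
        (t := Finset.univ) (fun _ _ => by simp)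
      rw [Finset.card_univ, hn, Fin.sum_univ_three] at hsum
      have h0 := hle 0
      have h1 := hle 1
      have h2 := hle 2
      intro a
      fin_cases a <;> simp only [Fin.zero_eta, Fin.mk_one, Fin.reduceFinMk] <;> omega
end
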